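/- arXiv:2209.04534 — 3 statements merged into one kernel-verified Lean document; each statement's English description precedes it below -/
import Mathlib

section
/- Let E be a real Hilbert space, S ⊆ E a nonempty closed convex set, T > 0, and x : [0, T] → E a trajectory such that x(t) ∉ S for all t ∈ [0, T]. Suppose that for every t ∈ [0, T], x has derivative x′(t) = c(t)·(x(t) − p(t)) at t, where p(t) is the metric projection of x(t) onto S and c(t) ≥ 0. Then the distance function t ↦ inf_{s ∈ S} ‖x(t) − s‖ is monotone non-decreasing on [0, T]. -/
/-!
The distance to a convex set `S` is a convex function which vanishes on `S`, so along a ray issuing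
from a point of `S` it never decreases. It is also `1`-Lipschitz, so along a trajectory `x` it
agrees to first order with its values along the tangent ray of `x`. Hence, if at every time `x`
moves straight away from some point of `S`, the lower right Dini derivative of the distance along
`x` is nonnegative, and a continuous function with this property is nondecreasing.
-/

open Asymptotics Filter Metric Set Topology

theorem convexOn_univ_infDist {E : Type*} [SeminormedAddCommGroup E] [NormedSpace ℝ E] {S : Set E}
    (hS : Convex ℝ S) : ConvexOn ℝ univ (infDist · S) := by
  rcases S.eq_empty_or_nonempty with rfl | hne
  · simpa using convexOn_const (0 : ℝ) convex_univ
  refine ⟨convex_univ, fun y _ z _ a b ha hb hab => le_of_forall_pos_le_add fun ε hε => ?_⟩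
  obtain ⟨s, hs, hys⟩ := (infDist_lt_iff hne).1 (lt_add_of_pos_right (infDist y S) hε)
  obtain ⟨u, hu, hzu⟩ := (infDist_lt_iff hne).1 (lt_add_of_pos_right (infDist z S) hε)
  calc infDist (a • y + b • z) S
      ≤ dist (a • y + b • z) (a • s + b • u) := infDist_le_dist_of_mem (hS hs hu ha hb hab)
    _ ≤ dist (a • y) (a • s) + dist (b • z) (b • u) := dist_add_add_le _ _ _ _
    _ = a * dist y s + b * dist z u := by
      simp only [dist_smul₀, Real.norm_of_nonneg ha, Real.norm_of_nonneg hb]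
    _ ≤ a * (infDist y S + ε) + b * (infDist z S + ε) := by gcongr
    _ = a • infDist y S + b • infDist z S + ε := by
      simp only [smul_eq_mul]
      linear_combination ε * hab

theorem le_add_smul_sub_of_convexOn {𝕜 E β : Type*} [Field 𝕜] [LinearOrder 𝕜]
    [IsStrictOrderedRing 𝕜] [AddCommGroup E] [Module 𝕜 E] [AddCommMonoid β] [LinearOrder β]
    [IsOrderedCancelAddMonoid β] [Module 𝕜 β] [PosSMulStrictMono 𝕜 β] {s : Set E} {f : E → β}
    (hf : ConvexOn 𝕜 s f) {q y : E} {r : 𝕜} (hr : 0 ≤ r) (hq : q ∈ s) (hy : y + r • (y - q) ∈ s)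
    (hqy : f q ≤ f y) : f y ≤ f (y + r • (y - q)) := by
  have hcomb : y = (r / (1 + r)) • q + (1 / (1 + r)) • (y + r • (y - q)) := by
    match_scalars <;> field_simp
    ring
  have hle := hf.le_right_of_left_le' hq hy (a := r / (1 + r)) (b := 1 / (1 + r))
    (by positivity) (by positivity) (by field_simp; ring)
  rw [← hcomb] at hle
  exact hle hqy

theorem infDist_le_infDist_add_smul_sub {E : Type*} [SeminormedAddCommGroup E] [NormedSpace ℝ E]
    {S : Set E} (hS : Convex ℝ S) {q : E} (hq : q ∈ S) (y : E) {r : ℝ} (hr : 0 ≤ r) :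
    infDist y S ≤ infDist (y + r • (y - q)) S :=
  le_add_smul_sub_of_convexOn (convexOn_univ_infDist hS) hr (mem_univ q) (mem_univ _)
    ((infDist_zero_of_mem hq).trans_le infDist_nonneg)

theorem monotoneOn_of_frequently_lt_slope {f : ℝ → ℝ} {a b : ℝ} (hf : ContinuousOn f (Icc a b))
    (hslope : ∀ t ∈ Ico a b, ∀ r < 0, ∃ᶠ z in 𝓝[>] t, r < slope f t z) :
    MonotoneOn f (Icc a b) := by
  intro u hu v hv huv
  refine neg_le_neg_iff.1 <| image_le_of_liminf_slope_right_le_deriv_boundary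
    (f := -f) (B := fun _ => -f u) (B' := 0) (hf.neg.mono (Icc_subset_Icc hu.1 hv.2)) le_rfl
    continuousOn_const (fun t _ => hasDerivWithinAt_const t _ _) (fun t ht r hr => ?_)
    (right_mem_Icc.2 huv)
  refine (hslope t ⟨hu.1.trans ht.1, ht.2.trans_le hv.2⟩ (-r) (neg_lt_zero.2 hr)).mono
    fun z hz => ?_
  simpa [slope_neg] using neg_lt.1 hz

theorem isLittleO_comp_sub_comp_add_smul {𝕜 E F : Type*} [NontriviallyNormedField 𝕜]
    [NormedAddCommGroup E] [NormedSpace 𝕜 E] [SeminormedAddCommGroup F] {K : NNReal} {f : E → F}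
    (hf : LipschitzWith K f) {x : 𝕜 → E} {v : E} {s : Set 𝕜} {t : 𝕜}
    (hx : HasDerivWithinAt x v s t) :
    (fun z => f (x z) - f (x t + (z - t) • v)) =o[𝓝[s] t] fun z => z - t := by
  refine (IsBigO.of_bound K (Eventually.of_forall fun z => ?_)).trans_isLittleO hx.isLittleO
  simpa only [sub_sub] using hf.norm_sub_le (x z) (x t + (z - t) • v)

section Trajectory

variable {E : Type*} [NormedAddCommGroup E] [NormedSpace ℝ E]

theorem eventually_lt_slope_comp {K : NNReal} {f : E → ℝ} (hf : LipschitzWith K f) {x : ℝ → E}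
    {v : E} {t : ℝ} (hx : HasDerivWithinAt x v (Ioi t) t)
    (hv : ∀ᶠ h in 𝓝[>] (0 : ℝ), f (x t) ≤ f (x t + h • v)) {r : ℝ} (hr : r < 0) :
    ∀ᶠ z in 𝓝[>] t, r < slope (f ∘ x) t z := by
  have hray : ∀ᶠ z in 𝓝[>] t, f (x t) ≤ f (x t + (z - t) • v) := by
    rw [← sub_self t, ← map_subRight_nhdsGT] at hv
    exact hv
  have hfirst : ∀ᶠ z in 𝓝[>] t, |f (x z) - f (x t + (z - t) • v)| ≤ -r / 2 * |z - t| :=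
    (isLittleO_comp_sub_comp_add_smul hf hx).def (by linarith)
  filter_upwards [hray, hfirst, self_mem_nhdsWithin] with z hzray hzfirst htz
  have hzt : 0 < z - t := sub_pos.2 htz
  rw [abs_of_pos hzt] at hzfirst
  rw [slope_def_field, lt_div_iff₀ hzt, Function.comp_apply, Function.comp_apply]
  linarith [neg_le_of_abs_le hzfirst, mul_neg_of_neg_of_pos hr hzt]

theorem monotoneOn_comp_of_eventually_le_add_smul {K : NNReal} {f : E → ℝ}
    (hf : LipschitzWith K f) {x v : ℝ → E} {a b : ℝ} (hx : ContinuousOn x (Icc a b))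
    (hderiv : ∀ t ∈ Ico a b, HasDerivWithinAt x (v t) (Ioi t) t)
    (hv : ∀ t ∈ Ico a b, ∀ᶠ h in 𝓝[>] (0 : ℝ), f (x t) ≤ f (x t + h • v t)) :
    MonotoneOn (f ∘ x) (Icc a b) :=
  monotoneOn_of_frequently_lt_slope (hf.continuous.comp_continuousOn hx) fun t ht _ hr =>
    (eventually_lt_slope_comp hf (hderiv t ht) (hv t ht) hr).frequently

theorem distance_nondecreasing_under_repulsive_motion_general {S : Set E} (hS : Convex ℝ S)
    {x q : ℝ → E} {c : ℝ → ℝ} {a b : ℝ} (hx : ContinuousOn x (Icc a b))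
    (hq : ∀ t ∈ Ico a b, q t ∈ S) (hc : ∀ t ∈ Ico a b, 0 ≤ c t)
    (hderiv : ∀ t ∈ Ico a b, HasDerivWithinAt x (c t • (x t - q t)) (Ioi t) t) :
    MonotoneOn (fun t => infDist (x t) S) (Icc a b) := by
  refine monotoneOn_comp_of_eventually_le_add_smul (lipschitz_infDist_pt S) hx hderiv
    fun t ht => ?_
  filter_upwards [self_mem_nhdsWithin] with h hh
  rw [smul_smul]
  exact infDist_le_infDist_add_smul_sub hS (hq t ht) (x t) (mul_nonneg (le_of_lt hh) (hc t ht))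

end Trajectory

/-- If the robot always moves in the direction `c(t)·(x(t) − p(t))`, where `p(t)` is the
metric projection of `x(t)` onto a nonempty closed convex set `S` and `c(t) ≥ 0`, then the
distance from the robot to `S` is non-decreasing on `[0, T]`. -/
theorem distance_nondecreasing_under_repulsive_motion
    {E : Type*} [NormedAddCommGroup E] [InnerProductSpace ℝ E] [CompleteSpace E]
    (S : Set E) (hS : S.Nonempty) (hSclosed : IsClosed S) (hSconv : Convex ℝ S)
    (T : ℝ) (hT : 0 < T) (x : ℝ → E) (p : ℝ → E) (c : ℝ → ℝ)
    (hx : ∀ t ∈ Set.Icc (0 : ℝ) T, x t ∉ S)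
    (hpS : ∀ t ∈ Set.Icc (0 : ℝ) T, p t ∈ S)
    (hpmin : ∀ t ∈ Set.Icc (0 : ℝ) T, ∀ s ∈ S, ‖x t - p t‖ ≤ ‖x t - s‖)
    (hc : ∀ t ∈ Set.Icc (0 : ℝ) T, 0 ≤ c t)
    (hderiv : ∀ t ∈ Set.Icc (0 : ℝ) T, HasDerivAt x (c t • (x t - p t)) t) :
    MonotoneOn (fun t => Metric.infDist (x t) S) (Set.Icc (0 : ℝ) T) :=
  distance_nondecreasing_under_repulsive_motion_general hSconv
    (fun t ht => (hderiv t ht).continuousAt.continuousWithinAt)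
    (fun t ht => hpS t (Ico_subset_Icc_self ht)) (fun t ht => hc t (Ico_subset_Icc_self ht))
    fun t ht => (hderiv t (Ico_subset_Icc_self ht)).hasDerivWithinAt
end

section
/- Let T > 0, δ ∈ ℝ, and let d : [0, T] → ℝ be continuous with d(0) > δ. Suppose that for every t ∈ [0, T], if d(t) > δ then (d(t) − δ)⁻² ≤ (d(0) − δ)⁻². Then d(t) ≥ d(0) for all t ∈ [0, T]; in particular d(t) > δ for all t ∈ [0, T]. -/
/-!
Since `x ↦ (x - δ)⁻²` is strictly decreasing for `x > δ`, the bound on the barrier says that `d`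
takes no value strictly between `δ` and its initial value. A continuous function on a connected set
cannot jump across this gap, so if it starts above the gap it stays above.
-/

theorem inv_sub_sq_le_inv_sub_sq_iff {K : Type*} [Field K] [LinearOrder K] [IsStrictOrderedRing K]
    {a x y : K} (hx : a < x) (hy : a < y) :
    (x - a)⁻¹ ^ 2 ≤ (y - a)⁻¹ ^ 2 ↔ y ≤ x := by
  have hxa : 0 < x - a := sub_pos.mpr hx
  have hya : 0 < y - a := sub_pos.mpr hy
  rw [sq_le_sq₀ (inv_pos.mpr hxa).le (inv_pos.mpr hya).le, inv_le_inv₀ hxa hya,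
    sub_le_sub_iff_right]

theorem forall_le_of_isPreconnected_of_forall_lt_imp_le {X α : Type*} [TopologicalSpace X]
    [LinearOrder α] [DenselyOrdered α] [TopologicalSpace α] [OrderClosedTopology α]
    {s : Set X} (hs : IsPreconnected s) {f : X → α} (hf : ContinuousOn f s) {a b : α} (hab : a < b)
    (hgap : ∀ x ∈ s, a < f x → b ≤ f x) {x₀ : X} (hx₀ : x₀ ∈ s) (hax₀ : a < f x₀) :
    ∀ x ∈ s, b ≤ f x := by
  intro x hx
  refine hgap x hx ?_
  by_contra! hxa
  obtain ⟨c, hac, hcb⟩ := exists_between hab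
  have hc : c ∈ Set.Icc (f x) (f x₀) :=
    ⟨hxa.trans hac.le, hcb.le.trans (hgap x₀ hx₀ hax₀)⟩
  obtain ⟨y, hy, rfl⟩ := hs.intermediate_value hx hx₀ hf hc
  exact (hgap y hy hac).not_gt hcb

theorem barrier_keeps_distance_above_threshold_general {X K : Type*} [TopologicalSpace X]
    [Field K] [LinearOrder K] [IsStrictOrderedRing K] [TopologicalSpace K] [OrderClosedTopology K]
    {s : Set X} (hs : IsPreconnected s) {d : X → K} (hd : ContinuousOn d s) {δ : K}
    {x₀ : X} (hx₀ : x₀ ∈ s) (hδ : δ < d x₀)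
    (hbar : ∀ x ∈ s, δ < d x → (d x - δ)⁻¹ ^ 2 ≤ (d x₀ - δ)⁻¹ ^ 2) :
    ∀ x ∈ s, d x₀ ≤ d x ∧ δ < d x := by
  have hgap : ∀ x ∈ s, δ < d x → d x₀ ≤ d x := fun x hx hδx =>
    (inv_sub_sq_le_inv_sub_sq_iff hδx hδ).mp (hbar x hx hδx)
  intro x hx
  have hle : d x₀ ≤ d x :=
    forall_le_of_isPreconnected_of_forall_lt_imp_le hs hd hδ hgap hx₀ hδ x hx
  exact ⟨hle, hδ.trans_le hle⟩

/-- Barrier argument: if `d` is continuous on `[0, T]` with `d 0 > δ`, and whenever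
`d t > δ` the barrier value `(d t − δ)⁻²` does not exceed its initial value, then
`d t ≥ d 0 > δ` for all `t ∈ [0, T]`. -/
theorem barrier_keeps_distance_above_threshold
    (T δ : ℝ) (hT : 0 < T) (d : ℝ → ℝ)
    (hcont : ContinuousOn d (Set.Icc 0 T))
    (h0 : δ < d 0)
    (hbar : ∀ t ∈ Set.Icc (0 : ℝ) T, δ < d t → (d t - δ)⁻¹ ^ 2 ≤ (d 0 - δ)⁻¹ ^ 2) :
    ∀ t ∈ Set.Icc (0 : ℝ) T, d 0 ≤ d t ∧ δ < d t :=
  barrier_keeps_distance_above_threshold_general isPreconnected_Icc hcont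
    (Set.left_mem_Icc.mpr hT.le) h0 hbar
end

section
/- Let E be a real Hilbert space, n ≥ 1, and let S₁, …, Sₙ ⊆ E be nonempty closed sets. Fix a goal point x_g ∈ E, gains K_p ≥ 0 and K_r > 0, a safety threshold δ > 0, and T > 0. Define the composed potential U(y) = (1/2)·K_p·‖y − x_g‖² + Σᵢ (1/2)·K_r·(dᵢ(y) − δ)⁻², where dᵢ(y) = inf_{s ∈ Sᵢ} ‖y − s‖, on the open region Ω = {y : dᵢ(y) > δ for all i}. Let x : [0, T] → E be a trajectory with x(t) ∈ Ω for all t ∈ [0, T], and suppose that for every t ∈ [0, T], U has a gradient g(t) at x(t) and x has derivative x′(t) = −g(t) at t. Then U(x(0)) > 0 and, for every t ∈ [0, T] and every i ∈ {1, …, n}, the distance satisfies dᵢ(x(t)) ≥ δ + √(K_r/(2·U(x(0)))). In particular the trajectory remains at distance strictly greater than δ from every set Sᵢ. -/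
open scoped BigOperators

/-!
Along a gradient flow line `x' = -∇U(x)` the chain rule gives `(U ∘ x)' = -‖∇U(x)‖² ≤ 0`, so
`U (x t) ≤ U (x 0)`. Since all terms of `U` are nonnegative, each repulsive term on its own is at
most `U (x 0)`, and solving that inequality for the distance gives the separation.
-/

namespace PotentialField

section GradientFlow

variable {E : Type*} [NormedAddCommGroup E] [InnerProductSpace ℝ E]
  {U : E → ℝ} {x : ℝ → E} {s : Set ℝ}

/-- The curve `x` follows the negative gradient flow of `U` on the time set `s`. The gradient is
expressed as the vector representing the Fréchet derivative, because Mathlib's `HasGradientAt` is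
restricted to complete spaces; derivatives in time are taken within `s`. -/
def IsGradientFlowOn (U : E → ℝ) (x : ℝ → E) (s : Set ℝ) : Prop :=
  ∀ t ∈ s, ∃ g : E, HasFDerivAt U (innerSL ℝ g) (x t) ∧ HasDerivWithinAt x (-g) s t

theorem IsGradientFlowOn.of_hasGradientAt [CompleteSpace E] {g : ℝ → E}
    (hU : ∀ t ∈ s, HasGradientAt U (g t) (x t))
    (hx : ∀ t ∈ s, HasDerivWithinAt x (-(g t)) s t) : IsGradientFlowOn U x s :=
  fun t ht => ⟨g t, (hU t ht).hasFDerivAt, hx t ht⟩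

theorem hasDerivWithinAt_comp_neg_gradient {g : E} {t : ℝ}
    (hU : HasFDerivAt U (innerSL ℝ g) (x t)) (hx : HasDerivWithinAt x (-g) s t) :
    HasDerivWithinAt (U ∘ x) (-‖g‖ ^ 2) s t := by
  have h := hU.comp_hasDerivWithinAt t hx
  rwa [innerSL_apply_apply, inner_neg_right, real_inner_self_eq_norm_sq] at h

theorem IsGradientFlowOn.antitoneOn (h : IsGradientFlowOn U x s) (hs : Convex ℝ s) :
    AntitoneOn (U ∘ x) s := by
  choose! g hU hx using h
  have hUx : ∀ t ∈ s, HasDerivWithinAt (U ∘ x) (-‖g t‖ ^ 2) s t := fun t ht =>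
    hasDerivWithinAt_comp_neg_gradient (hU t ht) (hx t ht)
  exact antitoneOn_of_hasDerivWithinAt_nonpos hs (fun t ht => (hUx t ht).continuousWithinAt)
    (fun t ht => (hUx t (interior_subset ht)).mono interior_subset)
    (fun t _ => neg_nonpos.mpr (sq_nonneg ‖g t‖))

end GradientFlow

section Repulsive

variable {K δ r c : ℝ}

/-- The repulsive potential with gain `K` and safety threshold `δ`, as a function of the distance
`r` to the obstacle. It takes the junk value `0` at the singularity `r = δ`. -/
noncomputable def repulsivePotential (K δ r : ℝ) : ℝ :=
  (1 / 2) * K * (r - δ)⁻¹ ^ 2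

theorem repulsivePotential_nonneg (hK : 0 ≤ K) : 0 ≤ repulsivePotential K δ r := by
  unfold repulsivePotential
  positivity

theorem repulsivePotential_pos (hK : 0 < K) (hr : δ < r) : 0 < repulsivePotential K δ r := by
  have hgap : 0 < (r - δ)⁻¹ := inv_pos.mpr (sub_pos.mpr hr)
  exact mul_pos (by positivity) (pow_pos hgap 2)

theorem repulsivePotential_eq_div : repulsivePotential K δ r = K / (2 * (r - δ) ^ 2) := by
  rw [repulsivePotential, inv_pow, ← div_eq_mul_inv, one_div_mul_eq_div, div_div]

theorem repulsivePotential_le_iff (hr : δ < r) (hc : 0 < c) :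
    repulsivePotential K δ r ≤ c ↔ δ + √(K / (2 * c)) ≤ r := by
  have hgap : 0 < r - δ := sub_pos.mpr hr
  calc repulsivePotential K δ r ≤ c
      ↔ K / (2 * (r - δ) ^ 2) ≤ c := by rw [repulsivePotential_eq_div]
    _ ↔ K / (2 * c) ≤ (r - δ) ^ 2 := by
        rw [div_le_iff₀ (by positivity), div_le_iff₀ (by positivity)]
        ring_nf
    _ ↔ √(K / (2 * c)) ≤ r - δ := (Real.sqrt_le_left hgap.le).symm
    _ ↔ δ + √(K / (2 * c)) ≤ r := le_sub_iff_add_le'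

end Repulsive

section Composed

variable {X ι : Type*} [Fintype ι] {A : X → ℝ} {d : ι → X → ℝ} {K δ : ℝ} {y : X}

/-- The composed potential: an attractive field `A` plus one repulsive field per obstacle, where
`d i y` is the clearance of the position `y` from the obstacle `i`. -/
noncomputable def composedPotential (A : X → ℝ) (d : ι → X → ℝ) (K δ : ℝ) (y : X) : ℝ :=
  A y + ∑ i, repulsivePotential K δ (d i y)

theorem repulsivePotential_le_composedPotential (hA : 0 ≤ A y) (hK : 0 ≤ K) (i : ι) :
    repulsivePotential K δ (d i y) ≤ composedPotential A d K δ y :=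
  calc repulsivePotential K δ (d i y)
      ≤ ∑ j, repulsivePotential K δ (d j y) :=
        Finset.single_le_sum (f := fun j => repulsivePotential K δ (d j y))
          (fun _ _ => repulsivePotential_nonneg hK) (Finset.mem_univ i)
    _ ≤ composedPotential A d K δ y := le_add_of_nonneg_left hA

theorem composedPotential_pos (hA : 0 ≤ A y) (hK : 0 < K) {i : ι} (hi : δ < d i y) :
    0 < composedPotential A d K δ y :=
  (repulsivePotential_pos hK hi).trans_le (repulsivePotential_le_composedPotential hA hK.le i)

theorem add_sqrt_le_of_composedPotential_le {c : ℝ} (hA : 0 ≤ A y) (hK : 0 < K) {i : ι}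
    (hi : δ < d i y) (hc : composedPotential A d K δ y ≤ c) :
    δ + √(K / (2 * c)) ≤ d i y :=
  (repulsivePotential_le_iff hi ((composedPotential_pos hA hK hi).trans_le hc)).mp
    ((repulsivePotential_le_composedPotential hA hK.le i).trans hc)

end Composed

end PotentialField

open PotentialField in
theorem safety_of_composed_potential_field_general
    {E : Type*} [NormedAddCommGroup E] [InnerProductSpace ℝ E]
    {ι : Type*} [Fintype ι] [Nonempty ι] {A : E → ℝ} {d : ι → E → ℝ} {K δ T : ℝ} {x : ℝ → E}
    (hA : ∀ y, 0 ≤ A y) (hK : 0 < K) (hT : 0 ≤ T)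
    (hΩ : ∀ t ∈ Set.Icc (0 : ℝ) T, ∀ i, δ < d i (x t))
    (hflow : IsGradientFlowOn (composedPotential A d K δ) x (Set.Icc 0 T)) :
    0 < composedPotential A d K δ (x 0) ∧
      ∀ t ∈ Set.Icc (0 : ℝ) T, ∀ i,
        δ + √(K / (2 * composedPotential A d K δ (x 0))) ≤ d i (x t) := by
  have h0 : (0 : ℝ) ∈ Set.Icc 0 T := Set.left_mem_Icc.mpr hT
  refine ⟨composedPotential_pos (hA _) hK (hΩ 0 h0 (Classical.arbitrary ι)), fun t ht i => ?_⟩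
  have hdecrease : composedPotential A d K δ (x t) ≤ composedPotential A d K δ (x 0) :=
    hflow.antitoneOn (convex_Icc 0 T) h0 ht ht.1
  exact add_sqrt_le_of_composedPotential_le (hA _) hK (hΩ t ht i) hdecrease

/-- Safety guarantee for the composed potential-field planner: along the gradient flow of
`U(y) = (1/2)·K_p·‖y − x_g‖² + ∑ i, (1/2)·K_r·(dᵢ(y) − δ)⁻²`, where `dᵢ` is the distance
to the `i`-th obstacle reachable set, the robot keeps a separation of at least
`δ + √(K_r / (2·U(x 0)))` from every reachable set. -/
theorem safety_of_composed_potential_field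
    {E : Type*} [NormedAddCommGroup E] [InnerProductSpace ℝ E] [CompleteSpace E]
    (n : ℕ) (hn : 1 ≤ n) (S : Fin n → Set E)
    (hSne : ∀ i, (S i).Nonempty) (hScl : ∀ i, IsClosed (S i))
    (x_g : E) (K_p K_r δ T : ℝ) (hKp : 0 ≤ K_p) (hKr : 0 < K_r) (hδ : 0 < δ) (hT : 0 < T)
    (U : E → ℝ)
    (hU : ∀ y : E, U y =
      (1 / 2) * K_p * ‖y - x_g‖ ^ 2 +
        ∑ i : Fin n, (1 / 2) * K_r * (Metric.infDist y (S i) - δ)⁻¹ ^ 2)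
    (x : ℝ → E) (g : ℝ → E)
    (hΩ : ∀ t ∈ Set.Icc (0 : ℝ) T, ∀ i : Fin n, δ < Metric.infDist (x t) (S i))
    (hgrad : ∀ t ∈ Set.Icc (0 : ℝ) T, HasGradientAt U (g t) (x t))
    (hderiv : ∀ t ∈ Set.Icc (0 : ℝ) T, HasDerivAt x (-(g t)) t) :
    0 < U (x 0) ∧
      ∀ t ∈ Set.Icc (0 : ℝ) T, ∀ i : Fin n,
        δ + Real.sqrt (K_r / (2 * U (x 0))) ≤ Metric.infDist (x t) (S i) := by
  obtain rfl : U = PotentialField.composedPotential (fun y => (1 / 2) * K_p * ‖y - x_g‖ ^ 2)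
      (fun i y => Metric.infDist y (S i)) K_r δ := funext hU
  have : Nonempty (Fin n) := ⟨⟨0, hn⟩⟩
  exact safety_of_composed_potential_field_general (fun y => by positivity) hKr hT.le hΩ
    (.of_hasGradientAt hgrad fun t ht => (hderiv t ht).hasDerivWithinAt)
end
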